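/- If a locally integrable function f on the open unit disc satisfies the VWMO condition, then the average function f̂ belongs to VO, i.e. sup_{w∈D(z,1)} |f̂(z) − f̂(w)| → 0 as |z| → 1. -/

import Mathlib

open MeasureTheory Set

noncomputable section

/-- The normalized area measure on the plane: planar Lebesgue measure divided by `π`. -/
def dA : Measure ℂ := (ENNReal.ofReal Real.pi)⁻¹ • volume

/-- The open unit disc `𝔻`. -/
def unitDisc : Set ℂ := {z : ℂ | ‖z‖ < 1}

/-- The argument `θ` of `z`, normalized to lie in `[0, 2π)`. -/
def theta (z : ℂ) : ℝ := toIcoMod Real.two_pi_pos 0 (Complex.arg z)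

/-- The angle of `ζ`, normalized to lie in `[theta z, theta z + 2π)`;
for `ζ ∈ B(z)` this is the angle `θ̃ ∈ [θ, θ + π(1-r)]` of the paper's convention. -/
def angFrom (z ζ : ℂ) : ℝ := toIcoMod Real.two_pi_pos (theta z) (Complex.arg ζ)

/-- The polar rectangle `{ρ e^{iφ} : r₁ ≤ ρ ≤ r₂, φ₁ ≤ φ ≤ φ₂}`. -/
def polarRect (r₁ r₂ φ₁ φ₂ : ℝ) : Set ℂ :=
  {w : ℂ | ∃ ρ φ : ℝ, r₁ ≤ ρ ∧ ρ ≤ r₂ ∧ φ₁ ≤ φ ∧ φ ≤ φ₂ ∧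
    w = (ρ : ℂ) * Complex.exp ((φ : ℂ) * Complex.I)}

/-- The set `B(z)` for `z = r e^{iθ} ∈ 𝔻`. -/
def Bz (z : ℂ) : Set ℂ :=
  polarRect ‖z‖ (1 - (1 - ‖z‖) / 2) (theta z) (theta z + Real.pi * (1 - ‖z‖))

/-- The set `B(z, ζ)` for `ζ ∈ B(z)`. -/
def Bzz (z ζ : ℂ) : Set ℂ := polarRect ‖z‖ ‖ζ‖ (theta z) (angFrom z ζ)

/-- The set `B(ζ₁, ζ₂)` for points `ζ₁ ≾ ζ₂` of `B(z)`. -/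
def Bsub (z ζ₁ ζ₂ : ℂ) : Set ℂ := polarRect ‖ζ₁‖ ‖ζ₂‖ (angFrom z ζ₁) (angFrom z ζ₂)

/-- The relation `ζ₁ ≾ ζ₂` for points of `B(z)`: `ρ₁ ≤ ρ₂` and `φ₁ ≤ φ₂`. -/
def precSim (z ζ₁ ζ₂ : ℂ) : Prop := ‖ζ₁‖ ≤ ‖ζ₂‖ ∧ angFrom z ζ₁ ≤ angFrom z ζ₂

/-- The average `f̂_K = (1/|K|) ∫_K f dA` of `f` over a set `K`. -/
def avgOn (f : ℂ → ℂ) (K : Set ℂ) : ℂ := ((dA K).toReal)⁻¹ • ∫ w in K, f w ∂dA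

/-- The average function `f̂(z) = f̂_{B(z)}`. -/
def avg (f : ℂ → ℂ) (z : ℂ) : ℂ := avgOn f (Bz z)

/-- The quantity `(1/|B(z)|) |∫_{B(z,ζ)} (f(ξ) - f̂(z)) dA(ξ)|`. -/
def wQuot (f : ℂ → ℂ) (z ζ : ℂ) : ℝ :=
  ((dA (Bz z)).toReal)⁻¹ * ‖∫ ξ in Bzz z ζ, (f ξ - avg f z) ∂dA‖

/-- The BWMO condition: `‖f‖_BWMO < ∞`. -/
def IsBWMO (f : ℂ → ℂ) : Prop := ∃ C : ℝ, ∀ z ∈ unitDisc, ∀ ζ ∈ Bz z, wQuot f z ζ ≤ C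

/-- The BWMO seminorm `‖f‖_BWMO`. -/
def bwmoNorm (f : ℂ → ℂ) : ℝ :=
  sSup {c : ℝ | ∃ z ∈ unitDisc, ∃ ζ ∈ Bz z, c = wQuot f z ζ}

/-- The VWMO condition:
`(1/|B(z)|) sup_{ζ ∈ B(z)} |∫_{B(z,ζ)} (f - f̂(z)) dA| → 0` as `|z| → 1`. -/
def IsVWMO (f : ℂ → ℂ) : Prop :=
  ∀ ε > (0:ℝ), ∃ r₀ < (1:ℝ), ∀ z ∈ unitDisc, r₀ ≤ ‖z‖ → ∀ ζ ∈ Bz z, wQuot f z ζ ≤ ε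

/-- The Bergman-metric disc `D(z,1)` of radius `1` centered at `z`. -/
def Dball (z : ℂ) : Set ℂ :=
  {w : ℂ | ‖w‖ < 1 ∧ ‖(z - w) / (1 - (starRingEnd ℂ) w * z)‖ < Real.tanh 1}

/-- The hyperbolic average `f̂₁(z) = (1/|D(z,1)|) ∫_{D(z,1)} f dA` of a real-valued `f`. -/
def avg1 (f : ℂ → ℝ) (z : ℂ) : ℝ := ((dA (Dball z)).toReal)⁻¹ * ∫ w in Dball z, f w ∂dA

/-- The mean oscillation `(1/|D(z,1)|) ∫_{D(z,1)} |f - f̂₁(z)| dA` of a real-valued `f`. -/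
def meanOsc1 (f : ℂ → ℝ) (z : ℂ) : ℝ :=
  ((dA (Dball z)).toReal)⁻¹ * ∫ ξ in Dball z, |f ξ - avg1 f z| ∂dA

/-- The Berezin transform `f̃(z) = ∫_𝔻 f(w) |k_z(w)|² dA(w)`,
where `k_z(w) = (1-|z|²)/(1-w z̄)²`. -/
def berezin (f : ℂ → ℂ) (z : ℂ) : ℂ :=
  ∫ w in unitDisc, f w * ((((1 - ‖z‖ ^ 2) ^ 2 / ‖1 - w * (starRingEnd ℂ) z‖ ^ 4 : ℝ)) : ℂ) ∂dA

/-- The example symbol of Section 4: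
`f(r e^{iθ}) = (1/(r (1-r)^{b-β})) sin(1/(1-r)^b)` for `r ≥ 1/2`, and `1` for `r < 1/2`. -/
def fEx (b β : ℝ) (z : ℂ) : ℝ :=
  if ‖z‖ < 1 / 2 then 1
  else (1 / (‖z‖ * (1 - ‖z‖) ^ (b - β))) * Real.sin (1 / (1 - ‖z‖) ^ b)

end

/-!
In polar coordinates `B(z)` is a box, and VWMO controls the integral of `f - f̂(z)` over its
sub-boxes anchored at the corner `z`. Any sub-box is an alternating sum of four anchored ones, so
the bound extends to all sub-boxes up to a factor `4`. If `z'` lies within a small multiple of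
`1 - |z|` of `z`, then `B(z)` and `B(z')` share a sub-box of area comparable to `(1 - |z|)²`;
comparing `f` there with both averages shows that `f̂(z) - f̂(z')` is small. Points at bounded
Bergman distance are joined by a polar segment that splits into a bounded number of such steps.
-/

section BoxIntegral

variable {α β E : Type*} [MeasurableSpace α] [MeasurableSpace β] [NormedAddCommGroup E]
  [NormedSpace ℝ E] {μ : Measure α} {ν : Measure β} [SFinite ν] {F : α × β → E}

theorem setIntegral_Icc_prod_add_adjacent [LinearOrder α] [TopologicalSpace α]
    [OrderClosedTopology α] [OpensMeasurableSpace α] [NullSingletonClass μ] {a b c : α}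
    {T : Set β} (hab : a ≤ b) (hbc : b ≤ c) (hT : MeasurableSet T)
    (hF : IntegrableOn F (Icc a c ×ˢ T) (μ.prod ν)) :
    ∫ p in Icc a b ×ˢ T, F p ∂μ.prod ν + ∫ p in Icc b c ×ˢ T, F p ∂μ.prod ν =
      ∫ p in Icc a c ×ˢ T, F p ∂μ.prod ν := by
  have hdisj : AEDisjoint (μ.prod ν) (Icc a b ×ˢ T) (Icc b c ×ˢ T) := by
    rw [AEDisjoint, prod_inter_prod, Icc_inter_Icc_eq_singleton hab hbc, inter_self]
    simp
  rw [← Icc_union_Icc_eq_Icc hab hbc, union_prod] at hF ⊢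
  exact (setIntegral_union₀ hdisj (measurableSet_Icc.prod hT).nullMeasurableSet
    hF.left_of_union hF.right_of_union).symm

theorem setIntegral_prod_Icc_add_adjacent [LinearOrder β] [TopologicalSpace β]
    [OrderClosedTopology β] [OpensMeasurableSpace β] [SFinite μ] [NullSingletonClass ν] {s t u : β}
    {S : Set α} (hst : s ≤ t) (htu : t ≤ u) (hS : MeasurableSet S)
    (hF : IntegrableOn F (S ×ˢ Icc s u) (μ.prod ν)) :
    ∫ p in S ×ˢ Icc s t, F p ∂μ.prod ν + ∫ p in S ×ˢ Icc t u, F p ∂μ.prod ν =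
      ∫ p in S ×ˢ Icc s u, F p ∂μ.prod ν := by
  simp only [← setIntegral_prod_swap S]
  exact setIntegral_Icc_prod_add_adjacent hst htu hS hF.swap

theorem norm_setIntegral_Icc_prod_Icc_le_four_mul [LinearOrder α] [TopologicalSpace α]
    [OrderClosedTopology α] [OpensMeasurableSpace α] [NullSingletonClass μ] [SFinite μ]
    [LinearOrder β] [TopologicalSpace β] [OrderClosedTopology β] [OpensMeasurableSpace β]
    [NullSingletonClass ν] {a₀ a b : α} {s₀ s t : β} {δ : ℝ} (ha : a₀ ≤ a) (hab : a ≤ b)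
    (hs : s₀ ≤ s) (hst : s ≤ t)
    (hF : IntegrableOn F (Icc a₀ b ×ˢ Icc s₀ t) (μ.prod ν))
    (hδ : ∀ x ∈ Icc a₀ b, ∀ y ∈ Icc s₀ t, ‖∫ p in Icc a₀ x ×ˢ Icc s₀ y, F p ∂μ.prod ν‖ ≤ δ) :
    ‖∫ p in Icc a b ×ˢ Icc s t, F p ∂μ.prod ν‖ ≤ 4 * δ := by
  set I : Set α → Set β → E := fun S T ↦ ∫ p in S ×ˢ T, F p ∂μ.prod ν
  have hadd : I (Icc a₀ a) (Icc s t) + I (Icc a b) (Icc s t) = I (Icc a₀ b) (Icc s t) :=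
    setIntegral_Icc_prod_add_adjacent ha hab measurableSet_Icc
      (hF.mono_set (prod_mono_right (Icc_subset_Icc_left hs)))
  have hadd' {x : α} (hx : x ≤ b) :
      I (Icc a₀ x) (Icc s₀ s) + I (Icc a₀ x) (Icc s t) = I (Icc a₀ x) (Icc s₀ t) :=
    setIntegral_prod_Icc_add_adjacent hs hst measurableSet_Icc
      (hF.mono_set (prod_mono_left (Icc_subset_Icc_right hx)))
  have hcorners : I (Icc a b) (Icc s t) =
      I (Icc a₀ b) (Icc s₀ t) - I (Icc a₀ b) (Icc s₀ s) -
        (I (Icc a₀ a) (Icc s₀ t) - I (Icc a₀ a) (Icc s₀ s)) := by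
    rw [← hadd' hab, ← hadd' le_rfl, ← hadd]
    abel
  have ha' : a ∈ Icc a₀ b := ⟨ha, hab⟩
  have hb : b ∈ Icc a₀ b := ⟨ha.trans hab, le_rfl⟩
  have hs' : s ∈ Icc s₀ t := ⟨hs, hst⟩
  have ht : t ∈ Icc s₀ t := ⟨hs.trans hst, le_rfl⟩
  calc ‖I (Icc a b) (Icc s t)‖
    _ ≤ ‖I (Icc a₀ b) (Icc s₀ t)‖ + ‖I (Icc a₀ b) (Icc s₀ s)‖ +
        (‖I (Icc a₀ a) (Icc s₀ t)‖ + ‖I (Icc a₀ a) (Icc s₀ s)‖) := by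
      rw [hcorners]
      exact (norm_sub_le _ _).trans (add_le_add (norm_sub_le _ _) (norm_sub_le _ _))
    _ ≤ 4 * δ := by
      linarith [hδ b hb t ht, hδ b hb s hs', hδ a ha' t ht, hδ a ha' s hs']

end BoxIntegral

theorem measureReal_mul_norm_sub_le {α E : Type*} [MeasurableSpace α] [NormedAddCommGroup E]
    [NormedSpace ℝ E] [CompleteSpace E] {μ : Measure α} {f : α → E} {K : Set α}
    (hK : μ K ≠ ⊤) (hf : IntegrableOn f K μ) (c c' : E) :
    μ.real K * ‖c - c'‖ ≤ ‖∫ x in K, (f x - c) ∂μ‖ + ‖∫ x in K, (f x - c') ∂μ‖ := by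
  have hsub (c : E) : Integrable (fun x ↦ f x - c) (μ.restrict K) :=
    hf.sub (integrableOn_const hK)
  have hdiff : ∫ x in K, (f x - c') ∂μ - ∫ x in K, (f x - c) ∂μ = μ.real K • (c - c') := by
    rw [← integral_sub (hsub c') (hsub c), ← setIntegral_const]
    simp only [sub_sub_sub_cancel_left]
  calc μ.real K * ‖c - c'‖
    _ = ‖∫ x in K, (f x - c') ∂μ - ∫ x in K, (f x - c) ∂μ‖ := by
      rw [hdiff, norm_smul, Real.norm_of_nonneg measureReal_nonneg]
    _ ≤ _ := by
      rw [add_comm]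
      exact norm_sub_le _ _

theorem dist_le_nat_mul_of_forall_mem_segment {V X : Type*} [AddCommGroup V] [Module ℝ V]
    [PseudoMetricSpace X] {F : V → X} {x y : V} {d : ℝ} {n : ℕ} (hn : n ≠ 0)
    (h : ∀ p ∈ segment ℝ x y, ∀ q ∈ segment ℝ x y, q - p = (n : ℝ)⁻¹ • (y - x) →
      dist (F p) (F q) ≤ d) :
    dist (F x) (F y) ≤ n * d := by
  have hn₀ : (n : ℝ) ≠ 0 := Nat.cast_ne_zero.2 hn
  let γ : ℕ → V := fun i ↦ AffineMap.lineMap x y ((i : ℝ) / n)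
  have hγ {i : ℕ} (hi : i ≤ n) : γ i ∈ segment ℝ x y := by
    rw [segment_eq_image_lineMap]
    exact mem_image_of_mem _ ⟨by positivity, div_le_one_of_le₀ (Nat.cast_le.2 hi) n.cast_nonneg⟩
  have hsub (i : ℕ) : γ (i + 1) - γ i = (n : ℝ)⁻¹ • (y - x) := by
    simp only [γ, AffineMap.lineMap_apply_module', add_sub_add_right_eq_sub, ← sub_smul]
    congr 1
    push_cast
    ring
  simpa [γ, hn₀] using dist_le_range_sum_of_dist_le (f := F ∘ γ) (d := fun _ ↦ d) n
    fun hi ↦ h _ (hγ hi.le) _ (hγ hi) (hsub _)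

section PolarCoord

variable {E : Type*} [NormedAddCommGroup E] [NormedSpace ℝ E] {S : Set (ℝ × ℝ)}

theorem polarCoord_symm_eq_mul_exp (r θ : ℝ) :
    Complex.polarCoord.symm (r, θ) = r * Complex.exp (θ * Complex.I) := by
  simp [Complex.exp_mul_I]

theorem polarCoord_symm_sub_zsmul (r θ : ℝ) (k : ℤ) :
    Complex.polarCoord.symm (r, θ - k • (2 * Real.pi)) = Complex.polarCoord.symm (r, θ) := by
  simp only [Complex.polarCoord_symm_apply, zsmul_eq_mul, Real.cos_sub_int_mul_two_pi,
    Real.sin_sub_int_mul_two_pi]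

theorem injOn_polarCoord_symm (s : ℝ) :
    InjOn Complex.polarCoord.symm (Ioi 0 ×ˢ Ico s (s + 2 * Real.pi)) := by
  rintro ⟨r, φ⟩ ⟨hr : 0 < r, hφ⟩ ⟨r', φ'⟩ ⟨hr' : 0 < r', hφ'⟩ h
  obtain rfl : r = r' := by
    simpa only [Complex.norm_polarCoord_symm, abs_of_pos hr, abs_of_pos hr'] using congrArg norm h
  have hexp : Circle.exp φ = Circle.exp φ' := by
    rw [polarCoord_symm_eq_mul_exp, polarCoord_symm_eq_mul_exp] at h
    exact Circle.ext (by simpa using mul_left_cancel₀ (Complex.ofReal_ne_zero.2 hr.ne') h)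
  exact Prod.ext rfl (Circle.exp_injOn_Ico (by simp) hφ hφ' hexp)

theorem injOn_polarCoord_symm_Icc_prod_Icc {a b s t : ℝ} (ha : 0 < a) (ht : t < s + 2 * Real.pi) :
    InjOn Complex.polarCoord.symm (Icc a b ×ˢ Icc s t) :=
  (injOn_polarCoord_symm s).mono <|
    prod_mono (fun _ hx ↦ ha.trans_le hx.1) (Icc_subset_Ico_right ht)

theorem image_polarCoord_symm (S : Set (ℝ × ℝ)) :
    Complex.polarCoord.symm '' S =
      Complex.measurableEquivRealProd.symm '' (polarCoord.symm '' S) := by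
  simp only [image_image, Complex.measurableEquivRealProd_symm_polarCoord_symm_apply]

theorem setIntegral_image_polarCoord_symm (hS : MeasurableSet S)
    (hinj : InjOn Complex.polarCoord.symm S) (g : ℂ → E) :
    ∫ w in Complex.polarCoord.symm '' S, g w =
      ∫ p in S, |p.1| • g (Complex.polarCoord.symm p) := by
  rw [image_polarCoord_symm, Complex.volume_preserving_equiv_real_prod.symm.setIntegral_image_emb
    (MeasurableEquiv.measurableEmbedding _),
    integral_image_eq_integral_abs_det_fderiv_smul volume hS
      (fun p _ ↦ (hasFDerivAt_polarCoord_symm p).hasFDerivWithinAt)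
      fun p hp q hq h ↦ hinj hp hq (congrArg Complex.measurableEquivRealProd.symm h)]
  simp only [det_fderivPolarCoordSymm, Complex.measurableEquivRealProd_symm_polarCoord_symm_apply]

theorem integrableOn_image_polarCoord_symm_iff (hS : MeasurableSet S)
    (hinj : InjOn Complex.polarCoord.symm S) {g : ℂ → E} :
    IntegrableOn g (Complex.polarCoord.symm '' S) ↔
      IntegrableOn (fun p ↦ |p.1| • g (Complex.polarCoord.symm p)) S := by
  rw [image_polarCoord_symm, Complex.volume_preserving_equiv_real_prod.symm.integrableOn_image
    (MeasurableEquiv.measurableEmbedding _),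
    integrableOn_image_iff_integrableOn_abs_det_fderiv_smul volume hS
      (fun p _ ↦ (hasFDerivAt_polarCoord_symm p).hasFDerivWithinAt)
      fun p hp q hq h ↦ hinj hp hq (congrArg Complex.measurableEquivRealProd.symm h)]
  simp only [det_fderivPolarCoordSymm, Function.comp_apply,
    Complex.measurableEquivRealProd_symm_polarCoord_symm_apply]

end PolarCoord

section PolarRect

variable {E : Type*} [NormedAddCommGroup E] [NormedSpace ℝ E] {a b s t : ℝ}

theorem polarRect_eq_image (a b s t : ℝ) :
    polarRect a b s t = Complex.polarCoord.symm '' (Icc a b ×ˢ Icc s t) := by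
  ext w
  simp only [polarRect, mem_ofPred_eq, mem_image, mem_prod, mem_Icc, Prod.exists,
    polarCoord_symm_eq_mul_exp]
  exact exists₂_congr fun ρ φ ↦ by grind

theorem isCompact_polarRect (a b s t : ℝ) : IsCompact (polarRect a b s t) := by
  rw [polarRect_eq_image]
  refine (isCompact_Icc.prod isCompact_Icc).image ?_
  simp only [funext Complex.polarCoord_symm_apply]
  fun_prop

theorem polarRect_subset_unitDisc (ha : 0 ≤ a) (hb : b < 1) : polarRect a b s t ⊆ unitDisc := by
  rw [polarRect_eq_image, image_subset_iff]
  rintro ⟨ρ, φ⟩ ⟨⟨haρ, hρb⟩, -⟩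
  rw [mem_preimage, unitDisc, mem_ofPred_eq, Complex.norm_polarCoord_symm,
    abs_of_nonneg (ha.trans haρ)]
  exact hρb.trans_lt hb

theorem polarRect_sub_zsmul (a b s t : ℝ) (k : ℤ) :
    polarRect a b (s - k • (2 * Real.pi)) (t - k • (2 * Real.pi)) = polarRect a b s t := by
  rw [polarRect_eq_image, polarRect_eq_image, ← image_sub_const_Icc, ← image_id (Icc a b),
    ← prodMap_image_prod, image_image, image_id]
  exact image_congr fun p _ ↦ polarCoord_symm_sub_zsmul p.1 p.2 k

theorem setIntegral_polarRect (ha : 0 < a) (ht : t < s + 2 * Real.pi) (g : ℂ → E) :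
    ∫ w in polarRect a b s t, g w ∂dA =
      ∫ p in Icc a b ×ˢ Icc s t, (p.1 / Real.pi) • g (Complex.polarCoord.symm p) := by
  have hS : MeasurableSet (Icc a b ×ˢ Icc s t) := measurableSet_Icc.prod measurableSet_Icc
  rw [dA, Measure.restrict_smul, integral_smul_measure, polarRect_eq_image,
    setIntegral_image_polarCoord_symm hS (injOn_polarCoord_symm_Icc_prod_Icc ha ht),
    ← integral_smul]
  refine setIntegral_congr_fun hS fun p hp ↦ ?_
  have hp₀ : 0 < p.1 := ha.trans_le hp.1.1
  simp only [smul_smul, abs_of_pos hp₀, ENNReal.toReal_inv,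
    ENNReal.toReal_ofReal Real.pi_pos.le, inv_mul_eq_div]

theorem integrableOn_polarRect_iff (ha : 0 < a) (ht : t < s + 2 * Real.pi) {g : ℂ → E} :
    IntegrableOn g (polarRect a b s t) dA ↔
      IntegrableOn (fun p ↦ (p.1 / Real.pi) • g (Complex.polarCoord.symm p))
        (Icc a b ×ˢ Icc s t) := by
  have hS : MeasurableSet (Icc a b ×ˢ Icc s t) := measurableSet_Icc.prod measurableSet_Icc
  rw [dA, IntegrableOn, Measure.restrict_smul,
    integrable_smul_measure (by simp) (by simp [Real.pi_pos]), ← IntegrableOn,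
    polarRect_eq_image,
    integrableOn_image_polarCoord_symm_iff hS (injOn_polarCoord_symm_Icc_prod_Icc ha ht),
    IntegrableOn, ← integrable_fun_smul_iff (inv_ne_zero Real.pi_ne_zero), ← IntegrableOn]
  refine integrableOn_congr_fun (fun p hp ↦ ?_) hS
  have hp₀ : 0 < p.1 := ha.trans_le hp.1.1
  simp only [smul_smul, abs_of_pos hp₀, inv_mul_eq_div]

theorem measureReal_polarRect (ha : 0 < a) (hab : a ≤ b) (hst : s ≤ t)
    (ht : t < s + 2 * Real.pi) :
    dA.real (polarRect a b s t) = (b ^ 2 - a ^ 2) / 2 * (t - s) / Real.pi := by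
  calc dA.real (polarRect a b s t)
    _ = ∫ _ in polarRect a b s t, (1 : ℝ) ∂dA := by simp
    _ = ∫ p in Icc a b ×ˢ Icc s t, p.1 * Real.pi⁻¹ := by
      simp only [setIntegral_polarRect ha ht, div_eq_mul_inv, smul_eq_mul, mul_one]
    _ = (∫ ρ in a..b, ρ) * ∫ _ in s..t, Real.pi⁻¹ := by
      rw [intervalIntegral.integral_of_le hab, intervalIntegral.integral_of_le hst,
        ← integral_Icc_eq_integral_Ioc, ← integral_Icc_eq_integral_Ioc, ← setIntegral_prod_mul]
      rfl
    _ = _ := by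
      rw [integral_id, intervalIntegral.integral_const, smul_eq_mul]
      ring

theorem norm_setIntegral_polarRect_le_four_mul {a₀ s₀ δ : ℝ} {g : ℂ → E} (ha₀ : 0 < a₀)
    (ha : a₀ ≤ a) (hab : a ≤ b) (hs : s₀ ≤ s) (hst : s ≤ t) (ht : t < s₀ + 2 * Real.pi)
    (hg : IntegrableOn g (polarRect a₀ b s₀ t) dA)
    (hδ : ∀ ρ ∈ Icc a₀ b, ∀ φ ∈ Icc s₀ t, ‖∫ w in polarRect a₀ ρ s₀ φ, g w ∂dA‖ ≤ δ) :
    ‖∫ w in polarRect a b s t, g w ∂dA‖ ≤ 4 * δ := by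
  rw [setIntegral_polarRect (ha₀.trans_le ha) (by linarith)]
  refine norm_setIntegral_Icc_prod_Icc_le_four_mul ha hab hs hst
    ((integrableOn_polarRect_iff ha₀ ht).1 hg) fun ρ hρ φ hφ ↦ ?_
  have := hδ ρ hρ φ hφ
  rwa [setIntegral_polarRect ha₀ (hφ.2.trans_lt ht)] at this

end PolarRect

instance isFiniteMeasureOnCompacts_dA : IsFiniteMeasureOnCompacts dA :=
  .smul volume (by simp [Real.pi_pos])

section Bz

variable {r θ ρ φ : ℝ}

theorem toIcoMod_arg_polarCoord_symm (hr : 0 < r) (s θ : ℝ) :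
    toIcoMod Real.two_pi_pos s (Complex.polarCoord.symm (r, θ)).arg =
      toIcoMod Real.two_pi_pos s θ := by
  rw [Complex.polarCoord_symm_apply, Complex.ofReal_cos, Complex.ofReal_sin,
    Complex.arg_mul_cos_add_sin_mul_I_eq_toIocMod hr, toIcoMod_toIocMod]

theorem Bz_polarCoord_symm (hr : 0 < r) (θ : ℝ) :
    Bz (Complex.polarCoord.symm (r, θ)) =
      polarRect r (1 - (1 - r) / 2) θ (θ + Real.pi * (1 - r)) := by
  rw [Bz, theta, toIcoMod_arg_polarCoord_symm hr, Complex.norm_polarCoord_symm, abs_of_pos hr,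
    ← self_sub_toIcoDiv_zsmul, sub_add_eq_add_sub, polarRect_sub_zsmul]

theorem Bzz_polarCoord_symm (hr : 0 < r) (hρ : 0 < ρ) (hφ : φ ∈ Ico θ (θ + 2 * Real.pi)) :
    Bzz (Complex.polarCoord.symm (r, θ)) (Complex.polarCoord.symm (ρ, φ)) =
      polarRect r ρ θ φ := by
  rw [Bzz, angFrom, theta, toIcoMod_arg_polarCoord_symm hr, toIcoMod_arg_polarCoord_symm hρ,
    Complex.norm_polarCoord_symm, Complex.norm_polarCoord_symm, abs_of_pos hr, abs_of_pos hρ,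
    ← self_sub_toIcoDiv_zsmul, toIcoMod_sub_zsmul', (toIcoMod_eq_self _).2 hφ,
    polarRect_sub_zsmul]

theorem measureReal_Bz (hr₀ : 0 < r) (hr₁ : r < 1) (θ : ℝ) :
    dA.real (Bz (Complex.polarCoord.symm (r, θ))) =
      ((1 - (1 - r) / 2) ^ 2 - r ^ 2) / 2 * (1 - r) := by
  have hπ : 0 < Real.pi * (1 - r) := mul_pos Real.pi_pos (sub_pos.2 hr₁)
  rw [Bz_polarCoord_symm hr₀, measureReal_polarRect hr₀ (by linarith) (by linarith)
    (by nlinarith [Real.pi_pos])]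
  field_simp
  ring

end Bz

section Oscillation

variable {f : ℂ → ℂ} {ε r r' θ θ' : ℝ}

/-- The numerator of the VWMO quotient at `r e^{iθ}` is at most `ε (1 - r)²`. The argument `θ`
ranges over `ℝ` rather than `[0, 2π)`, and `(1 - r)²` replaces the comparable area of
`B(r e^{iθ})`. -/
def HasPolarOscLE (f : ℂ → ℂ) (ε r θ : ℝ) : Prop :=
  ∀ ρ ∈ Icc r (1 - (1 - r) / 2), ∀ φ ∈ Icc θ (θ + Real.pi * (1 - r)),
    ‖∫ ξ in polarRect r ρ θ φ, (f ξ - avg f (Complex.polarCoord.symm (r, θ))) ∂dA‖ ≤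
      ε * (1 - r) ^ 2

theorem hasPolarOscLE_of_forall_wQuot_le (hε : 0 ≤ ε) (hr₀ : 0 < r) (hr₁ : r < 1)
    (h : ∀ ζ ∈ Bz (Complex.polarCoord.symm (r, θ)),
      wQuot f (Complex.polarCoord.symm (r, θ)) ζ ≤ ε) :
    HasPolarOscLE f ε r θ := by
  intro ρ hρ φ hφ
  have hζ : Complex.polarCoord.symm (ρ, φ) ∈ Bz (Complex.polarCoord.symm (r, θ)) := by
    rw [Bz_polarCoord_symm hr₀, polarRect_eq_image]
    exact mem_image_of_mem _ ⟨hρ, hφ⟩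
  have hφ' : φ ∈ Ico θ (θ + 2 * Real.pi) := ⟨hφ.1, by nlinarith [hφ.2, Real.pi_pos]⟩
  have hquot := h _ hζ
  have harea := measureReal_Bz hr₀ hr₁ θ
  have hpos : 0 < dA.real (Bz (Complex.polarCoord.symm (r, θ))) := by
    rw [harea]
    nlinarith [mul_pos hr₀ (sub_pos.2 hr₁), mul_pos (sub_pos.2 hr₁) (sub_pos.2 hr₁)]
  rw [wQuot, Bzz_polarCoord_symm hr₀ (hr₀.trans_le hρ.1) hφ', ← Measure.real,
    inv_mul_le_iff₀ hpos, mul_comm] at hquot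
  refine hquot.trans (mul_le_mul_of_nonneg_left ?_ hε)
  rw [harea]
  nlinarith [mul_pos (sub_pos.2 hr₁) (sub_pos.2 hr₁)]

theorem IsVWMO.exists_hasPolarOscLE (hf : IsVWMO f) (hε : 0 < ε) :
    ∃ r₀ < 1, ∀ r θ, 0 < r → r₀ ≤ r → r < 1 → HasPolarOscLE f ε r θ := by
  obtain ⟨r₀, hr₀, h⟩ := hf ε hε
  refine ⟨r₀, hr₀, fun r θ hr hr₀r hr₁ ↦ hasPolarOscLE_of_forall_wQuot_le hε.le hr hr₁ (h _ ?_ ?_)⟩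
  · rwa [unitDisc, mem_ofPred_eq, Complex.norm_polarCoord_symm, abs_of_pos hr]
  · rwa [Complex.norm_polarCoord_symm, abs_of_pos hr]

theorem HasPolarOscLE.norm_setIntegral_le {a b s t : ℝ} (h : HasPolarOscLE f ε r θ)
    (hf : LocallyIntegrableOn f unitDisc dA) (hr₀ : 0 < r) (hr₁ : r < 1)
    (ha : r ≤ a) (hab : a ≤ b) (hb : b ≤ 1 - (1 - r) / 2) (hs : θ ≤ s) (hst : s ≤ t)
    (ht : t ≤ θ + Real.pi * (1 - r)) :
    ‖∫ ξ in polarRect a b s t, (f ξ - avg f (Complex.polarCoord.symm (r, θ))) ∂dA‖ ≤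
      4 * (ε * (1 - r) ^ 2) := by
  have hint : IntegrableOn (fun ξ ↦ f ξ - avg f (Complex.polarCoord.symm (r, θ)))
      (polarRect r b θ t) dA :=
    (hf.sub (locallyIntegrableOn_const _)).integrableOn_compact_subset
      (polarRect_subset_unitDisc hr₀.le (by linarith)) (isCompact_polarRect ..)
  exact norm_setIntegral_polarRect_le_four_mul hr₀ ha hab hs hst
    (by nlinarith [Real.pi_pos]) hint
    fun ρ hρ φ hφ ↦ h ρ ⟨hρ.1, hρ.2.trans hb⟩ φ ⟨hφ.1, hφ.2.trans ht⟩

theorem HasPolarOscLE.nonneg (h : HasPolarOscLE f ε r θ) (hr : r < 1) : 0 ≤ ε := by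
  have hcorner := h r ⟨le_rfl, by linarith⟩ θ
    ⟨le_rfl, le_add_of_nonneg_right (mul_nonneg Real.pi_pos.le (sub_nonneg.2 hr.le))⟩
  exact nonneg_of_mul_nonneg_left ((norm_nonneg _).trans hcorner) (pow_pos (sub_pos.2 hr) 2)

theorem sq_div_le_measureReal_polarRect (hr₀ : 0 < r) (hr₁ : r < 1) (hrr' : r ≤ r')
    (hr' : r' ≤ r + (1 - r) / 4) (s : ℝ) :
    (1 - r) ^ 2 / 32 ≤
      dA.real (polarRect r' (1 - (1 - r) / 2) s (s + Real.pi * (1 - r) / 2)) := by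
  have hπ : 0 < Real.pi * (1 - r) := mul_pos Real.pi_pos (sub_pos.2 hr₁)
  have hsq : (1 - r) / 8 ≤ (1 - (1 - r) / 2) ^ 2 - r' ^ 2 := by nlinarith
  rw [measureReal_polarRect (by linarith) (by linarith) (by linarith)
    (by nlinarith [Real.pi_pos])]
  calc (1 - r) ^ 2 / 32
    _ = (1 - r) / 8 * ((1 - r) / 4) := by ring
    _ ≤ ((1 - (1 - r) / 2) ^ 2 - r' ^ 2) * ((1 - r) / 4) := by gcongr
    _ = _ := by
      field_simp
      ring

theorem norm_avg_sub_avg_le_of_hasPolarOscLE (hf : LocallyIntegrableOn f unitDisc dA)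
    (hr₀ : 0 < r) (hr₁ : r < 1) (hrr' : r ≤ r') (hr' : r' ≤ r + (1 - r) / 4)
    (hθ : |θ - θ'| ≤ Real.pi * (1 - r) / 4) (h : HasPolarOscLE f ε r θ)
    (h' : HasPolarOscLE f ε r' θ') :
    ‖avg f (Complex.polarCoord.symm (r, θ)) - avg f (Complex.polarCoord.symm (r', θ'))‖ ≤
      256 * ε := by
  obtain ⟨hθ₁, hθ₂⟩ := abs_le.1 hθ
  have hπ : 0 < Real.pi * (1 - r) := mul_pos Real.pi_pos (sub_pos.2 hr₁)
  have hπ' : Real.pi * (3 / 4 * (1 - r)) ≤ Real.pi * (1 - r') :=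
    mul_le_mul_of_nonneg_left (by linarith) Real.pi_pos.le
  set s := max θ θ'
  have hθs : θ ≤ s := le_max_left θ θ'
  have hθ's : θ' ≤ s := le_max_right θ θ'
  have hsθ : s ≤ θ + Real.pi * (1 - r) / 4 := max_le (by linarith) (by linarith)
  have hsθ' : s ≤ θ' + Real.pi * (1 - r) / 4 := max_le (by linarith) (by linarith)
  set K := polarRect r' (1 - (1 - r) / 2) s (s + Real.pi * (1 - r) / 2)
  have hK : IsCompact K := isCompact_polarRect ..
  have hint : IntegrableOn f K dA :=
    hf.integrableOn_compact_subset (polarRect_subset_unitDisc (by linarith) (by linarith)) hK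
  have harea : (1 - r) ^ 2 / 32 ≤ dA.real K :=
    sq_div_le_measureReal_polarRect hr₀ hr₁ hrr' hr' s
  have hosc : ‖∫ ξ in K, (f ξ - avg f (Complex.polarCoord.symm (r, θ))) ∂dA‖ ≤
      4 * (ε * (1 - r) ^ 2) :=
    h.norm_setIntegral_le hf hr₀ hr₁ hrr' (by linarith) le_rfl hθs (by linarith) (by linarith)
  have hosc' : ‖∫ ξ in K, (f ξ - avg f (Complex.polarCoord.symm (r', θ'))) ∂dA‖ ≤
      4 * (ε * (1 - r') ^ 2) :=
    h'.norm_setIntegral_le hf (by linarith) (by linarith) le_rfl (by linarith) (by linarith)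
      hθ's (by linarith) (by linarith)
  have hsq : ε * (1 - r') ^ 2 ≤ ε * (1 - r) ^ 2 :=
    mul_le_mul_of_nonneg_left (by gcongr; linarith) (h.nonneg hr₁)
  set Δ := avg f (Complex.polarCoord.symm (r, θ)) - avg f (Complex.polarCoord.symm (r', θ'))
  suffices (1 - r) ^ 2 / 32 * ‖Δ‖ ≤ (1 - r) ^ 2 / 32 * (256 * ε) from
    le_of_mul_le_mul_left this (div_pos (pow_pos (sub_pos.2 hr₁) 2) (by norm_num))
  calc (1 - r) ^ 2 / 32 * ‖Δ‖
    _ ≤ dA.real K * ‖Δ‖ := by gcongr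
    _ ≤ _ := measureReal_mul_norm_sub_le hK.measure_ne_top hint _ _
    _ ≤ (1 - r) ^ 2 / 32 * (256 * ε) := by linarith

theorem norm_avg_sub_avg_le_nat_mul (hf : LocallyIntegrableOn f unitDisc dA) (hr₀ : 0 < r)
    (hrr' : r ≤ r') (hr' : r' < 1) {n : ℕ} (hn : n ≠ 0) (hr : 4 * (r' - r) ≤ n * (1 - r'))
    (hθ : 4 * |θ' - θ| ≤ n * (Real.pi * (1 - r')))
    (hosc : ∀ ρ ∈ Icc r r', ∀ φ, HasPolarOscLE f ε ρ φ) :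
    ‖avg f (Complex.polarCoord.symm (r, θ)) - avg f (Complex.polarCoord.symm (r', θ'))‖ ≤
      n * (256 * ε) := by
  have hn₀ : (0 : ℝ) < n := Nat.cast_pos.2 hn.bot_lt
  have hr_small : (n : ℝ)⁻¹ * (r' - r) ≤ (1 - r') / 4 := by
    rw [inv_mul_le_iff₀ hn₀]
    linarith
  have hθ_small : |(n : ℝ)⁻¹ * (θ' - θ)| ≤ Real.pi * (1 - r') / 4 := by
    rw [abs_mul, abs_inv, Nat.abs_cast, inv_mul_le_iff₀ hn₀]
    linarith
  have hfst {p : ℝ × ℝ} (hp : p ∈ segment ℝ (r, θ) (r', θ')) : p.1 ∈ Icc r r' :=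
    segment_eq_Icc hrr' ▸ (Prod.segment_subset _ _ hp).1
  rw [← dist_eq_norm]
  refine dist_le_nat_mul_of_forall_mem_segment (F := fun p ↦ avg f (Complex.polarCoord.symm p)) hn
    fun ⟨ρ, φ⟩ hp ⟨ρ', φ'⟩ hq hpq ↦ ?_
  obtain ⟨hρ, hφ⟩ : ρ' - ρ = (n : ℝ)⁻¹ * (r' - r) ∧ φ' - φ = (n : ℝ)⁻¹ * (θ' - θ) :=
    Prod.ext_iff.1 hpq
  have hρr' : r ≤ ρ ∧ ρ ≤ r' := hfst hp
  have hπ : Real.pi * (1 - r') ≤ Real.pi * (1 - ρ) :=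
    mul_le_mul_of_nonneg_left (by linarith) Real.pi_pos.le
  have hρ₀ : 0 ≤ ρ' - ρ := by
    rw [hρ]
    exact mul_nonneg (inv_nonneg.2 hn₀.le) (sub_nonneg.2 hrr')
  rw [← hφ, abs_sub_comm] at hθ_small
  rw [dist_eq_norm]
  exact norm_avg_sub_avg_le_of_hasPolarOscLE hf (by linarith) (by linarith) (by linarith)
    (by linarith) (by linarith) (hosc ρ (hfst hp) φ) (hosc ρ' (hfst hq) φ')

end Oscillation

section Geometry

variable {z w : ℂ}

theorem abs_arg_le_pi_mul_norm_sub_one (z : ℂ) : |z.arg| ≤ Real.pi * ‖z - 1‖ := by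
  obtain rfl | hz := eq_or_ne z 0
  · simpa using Real.pi_pos.le
  have hz₀ : 0 < ‖z‖ := norm_pos_iff.2 hz
  set u : ℂ := (‖z‖⁻¹ : ℝ) • z
  have hu : ‖u‖ = 1 := by simp [u, hz]
  have hzu : ‖u - z‖ ≤ ‖z - 1‖ := by
    calc ‖u - z‖
      _ = |1 - ‖z‖| := by
        rw [(SameRay.sameRay_pos_smul_left z (inv_pos.2 hz₀)).norm_sub, hu]
      _ ≤ ‖z - 1‖ := by simpa [abs_sub_comm] using abs_norm_sub_norm_le z 1
  calc |z.arg|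
    _ = InnerProductGeometry.angle u 1 := by
      rw [InnerProductGeometry.angle_smul_left_of_pos _ _ (inv_pos.2 hz₀),
        Complex.angle_one_right hz]
    _ ≤ Real.pi / 2 * ‖u - 1‖ := Complex.angle_le_mul_norm_sub hu norm_one
    _ ≤ Real.pi / 2 * (‖u - z‖ + ‖z - 1‖) := by gcongr; exact norm_sub_le_norm_sub_add_norm_sub ..
    _ ≤ Real.pi / 2 * (‖z - 1‖ + ‖z - 1‖) := by gcongr
    _ = Real.pi * ‖z - 1‖ := by ring

theorem polarCoord_symm_norm_arg (z : ℂ) : Complex.polarCoord.symm (‖z‖, z.arg) = z := by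
  rw [polarCoord_symm_eq_mul_exp, Complex.norm_mul_exp_arg_mul_I]

theorem polarCoord_symm_norm_arg_add_arg_div (hz : z ≠ 0) (w : ℂ) :
    Complex.polarCoord.symm (‖w‖, z.arg + (w / z).arg) = w := by
  calc Complex.polarCoord.symm (‖w‖, z.arg + (w / z).arg)
    _ = ‖z‖ * Complex.exp (z.arg * Complex.I) *
        (‖w / z‖ * Complex.exp ((w / z).arg * Complex.I)) := by
      have hz' : (‖z‖ : ℂ) ≠ 0 := by simpa using hz
      rw [polarCoord_symm_eq_mul_exp, Complex.ofReal_add, add_mul, Complex.exp_add, norm_div,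
        Complex.ofReal_div]
      field_simp
    _ = w := by
      rw [Complex.norm_mul_exp_arg_mul_I, Complex.norm_mul_exp_arg_mul_I, mul_div_cancel₀ _ hz]

theorem norm_sub_le_of_norm_sub_div_le {τ : ℝ} (hτ : τ < 1) (hz : ‖z‖ < 1) (hw : ‖w‖ < 1)
    (h : ‖(z - w) / (1 - (starRingEnd ℂ) w * z)‖ ≤ τ) :
    ‖z - w‖ ≤ 2 / (1 - τ) * (1 - ‖z‖) := by
  have hne : 1 - (starRingEnd ℂ) w * z ≠ 0 := by
    refine sub_ne_zero.2 fun heq ↦ ?_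
    have := congrArg norm heq
    rw [norm_one, norm_mul, RCLike.norm_conj] at this
    nlinarith [norm_nonneg z, norm_nonneg w]
  have hτ₀ : 0 ≤ τ := (norm_nonneg _).trans h
  have hden : ‖1 - (starRingEnd ℂ) w * z‖ ≤ 2 * (1 - ‖z‖) + ‖z - w‖ := by
    calc ‖1 - (starRingEnd ℂ) w * z‖
      _ = ‖((1 - ‖z‖ ^ 2 : ℝ) : ℂ) + (starRingEnd ℂ) (z - w) * z‖ := by
        congr 1
        rw [map_sub, sub_mul, Complex.conj_mul']
        push_cast
        ring
      _ ≤ |1 - ‖z‖ ^ 2| + ‖z - w‖ * ‖z‖ := by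
        refine (norm_add_le _ _).trans_eq ?_
        rw [Complex.norm_real, Real.norm_eq_abs, norm_mul, RCLike.norm_conj]
      _ ≤ 2 * (1 - ‖z‖) + ‖z - w‖ := by
        rw [abs_of_nonneg (by nlinarith [norm_nonneg z])]
        nlinarith [norm_nonneg z, norm_nonneg (z - w)]
  rw [norm_div, div_le_iff₀ (norm_pos_iff.2 hne)] at h
  rw [div_mul_eq_mul_div, le_div_iff₀ (sub_pos.2 hτ)]
  nlinarith

end Geometry

theorem norm_avg_sub_avg_le_of_norm_sub_le {f : ℂ → ℂ} {ε : ℝ} {z w : ℂ} {n : ℕ}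
    (hf : LocallyIntegrableOn f unitDisc dA) (hz : 1 / 2 ≤ ‖z‖) (hzw : ‖z‖ ≤ ‖w‖)
    (hw : ‖w‖ < 1) (hn : n ≠ 0) (hdist : 8 * ‖z - w‖ ≤ n * (1 - ‖w‖))
    (hosc : ∀ ρ ∈ Icc ‖z‖ ‖w‖, ∀ φ, HasPolarOscLE f ε ρ φ) :
    ‖avg f z - avg f w‖ ≤ n * (256 * ε) := by
  have hz₀ : z ≠ 0 := norm_pos_iff.1 (by linarith)
  have hradial : ‖w‖ - ‖z‖ ≤ ‖z - w‖ := norm_sub_rev w z ▸ norm_sub_norm_le w z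
  have hangle : |(w / z).arg| ≤ Real.pi * (2 * ‖z - w‖) := by
    refine (abs_arg_le_pi_mul_norm_sub_one _).trans ?_
    gcongr
    rw [div_sub_one hz₀, norm_div, norm_sub_rev, div_le_iff₀ (by linarith)]
    nlinarith [norm_nonneg (z - w)]
  have hpolar := norm_avg_sub_avg_le_nat_mul (θ := z.arg) (θ' := z.arg + (w / z).arg) hf
    (by linarith) hzw hw hn (by linarith [norm_nonneg (z - w)])
    (by rw [add_sub_cancel_left]; nlinarith [Real.pi_pos]) hosc
  rwa [polarCoord_symm_norm_arg, polarCoord_symm_norm_arg_add_arg_div hz₀] at hpolar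

theorem IsVWMO.exists_norm_avg_sub_avg_le {f : ℂ → ℂ} (hvwmo : IsVWMO f)
    (hf : LocallyIntegrableOn f unitDisc dA) (C : ℝ) {ε : ℝ} (hε : 0 < ε) :
    ∃ r₀ < 1, ∀ z w : ℂ, r₀ ≤ ‖z‖ → ‖z‖ ≤ ‖w‖ → ‖w‖ < 1 → ‖z - w‖ ≤ C * (1 - ‖w‖) →
      ‖avg f z - avg f w‖ ≤ ε := by
  obtain ⟨n, hn⟩ := exists_nat_gt (max 0 (8 * C))
  obtain ⟨hn₀, hnC⟩ := max_lt_iff.1 hn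
  obtain ⟨r₀, hr₀, hosc⟩ := hvwmo.exists_hasPolarOscLE (ε := ε / (n * 256)) (by positivity)
  refine ⟨max r₀ (1 / 2), max_lt hr₀ (by norm_num), fun z w hz hzw hw hdist ↦ ?_⟩
  obtain ⟨hzr₀, hz₂⟩ := max_le_iff.1 hz
  calc ‖avg f z - avg f w‖
    _ ≤ n * (256 * (ε / (n * 256))) :=
      norm_avg_sub_avg_le_of_norm_sub_le hf hz₂ hzw hw (Nat.cast_pos.1 hn₀).ne' (by nlinarith)
        fun ρ hρ φ ↦ hosc ρ φ (by linarith [hρ.1]) (hzr₀.trans hρ.1) (hρ.2.trans_lt hw)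
    _ = ε := by field_simp

theorem vwmo_avg_mem_VO_general (f : ℂ → ℂ) (hf : LocallyIntegrableOn f unitDisc dA)
    (hvwmo : IsVWMO f) (τ : ℝ) (hτ : τ < 1) :
    ∀ ε > (0 : ℝ), ∃ r₀ < (1 : ℝ), ∀ z ∈ unitDisc, r₀ ≤ ‖z‖ → ∀ w ∈ unitDisc,
      ‖(z - w) / (1 - (starRingEnd ℂ) w * z)‖ ≤ τ → ‖avg f z - avg f w‖ ≤ ε := by
  intro ε hε
  have hC : 0 < 2 / (1 - τ) := div_pos two_pos (sub_pos.2 hτ)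
  obtain ⟨r₁, hr₁, h⟩ := hvwmo.exists_norm_avg_sub_avg_le hf (2 / (1 - τ)) hε
  set C := 2 / (1 - τ)
  refine ⟨1 - (1 - r₁) / (1 + C), sub_lt_self _ (div_pos (sub_pos.2 hr₁) (by linarith)),
    fun z hz hzr w hw hzw ↦ ?_⟩
  have hdist : ‖z - w‖ ≤ C * (1 - ‖z‖) := norm_sub_le_of_norm_sub_div_le hτ hz hw hzw
  have hdist' : ‖w - z‖ ≤ C * (1 - ‖w‖) := by
    refine norm_sub_le_of_norm_sub_div_le hτ hw hz ?_
    rwa [norm_div, norm_sub_rev, ← RCLike.norm_conj (1 - _), map_sub, map_one, map_mul,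
      Complex.conj_conj, mul_comm, ← norm_div]
  have hzr₁ : (1 + C) * (1 - ‖z‖) ≤ 1 - r₁ := by
    rw [mul_comm, ← le_div_iff₀ (by linarith)]
    linarith
  obtain hle | hle := le_total ‖z‖ ‖w‖
  · exact h z w (by nlinarith [hz.out]) hle hw (norm_sub_rev z w ▸ hdist')
  · rw [norm_sub_rev]
    exact h w z (by linarith [norm_sub_norm_le z w]) hle hz (norm_sub_rev z w ▸ hdist)

/-- If a locally integrable `f` on `𝔻` satisfies the VWMO condition, then
the average function `f̂` is of vanishing oscillation:
`sup_{w∈D(z,1)} |f̂(z) - f̂(w)| → 0` as `|z| → 1`. -/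
theorem vwmo_avg_mem_VO (f : ℂ → ℂ) (hf : MeasureTheory.LocallyIntegrableOn f unitDisc dA)
    (hvwmo : IsVWMO f) :
    ∀ ε > (0:ℝ), ∃ r₀ < (1:ℝ), ∀ z ∈ unitDisc, r₀ ≤ ‖z‖ →
      ∀ w ∈ Dball z, ‖avg f z - avg f w‖ ≤ ε := by
  intro ε hε
  obtain ⟨r₀, hr₀, h⟩ :=
    vwmo_avg_mem_VO_general f hf hvwmo (Real.tanh 1) (Real.tanh_lt_one 1) ε hε
  exact ⟨r₀, hr₀, fun z hz hzr w hw ↦ h z hz hzr w hw.1 hw.2.le⟩
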